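/- arXiv:2206.08276 — 4 statements merged into one kernel-verified Lean document; each statement's English description precedes it below -/
import Mathlib

section
/- Let G be a group, let k ≥ 0 and C ≥ 1 be integers, and let S ⊆ G be a subset of self-translate dimension ≤ k of complexity C. Let X_0, X_1, …, X_k be independent G-valued random elements, each with a discrete distribution, and set ρ_i = sup over g ∈ G of P(X_i = g). Then there is a constant K depending only on C and k such that P(X_0 X_1 ⋯ X_k ∈ S) ≤ K · max over 0 ≤ i ≤ k of ρ_i^{1/2^i}. -/
open scoped ENNReal NNReal BigOperators

universe u

/-- `S ⊆ G` has self-translate dimension `≤ k` of complexity `C`. -/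
inductive SelfTranslateDim {G : Type u} [Group G] (C : ℕ) : ℕ → Set G → Prop
  | base (S : Set G) (hfin : S.Finite) (hcard : Nat.card S ≤ C) : SelfTranslateDim C 0 S
  | step (k : ℕ) (S : Set G) (T : Fin C → Set G) (hS : S = ⋃ i, T i)
      (h : ∀ i (g : G), g ≠ 1 →
        SelfTranslateDim C k (T i ∩ ((fun x => g * x) '' T i))) :
      SelfTranslateDim C (k + 1) S

/-- The probability that the ordered product `X_0 X_1 ⋯ X_{n-1}` of independent random
elements `X_i ~ ν i` lies in `S`. -/
noncomputable def walkProb {G : Type u} [Group G] {n : ℕ} (ν : Fin n → PMF G)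
    (S : Set G) : ℝ≥0∞ :=
  ∑' v : Fin n → G, (∏ i, ν i (v i)) * S.indicator (fun _ => (1 : ℝ≥0∞)) (List.ofFn v).prod

/-! Cut `S` into `C` cells `T`, and put `Y = X_1 ⋯ X_k` with `X_0'` an independent copy of `X_0`.
By Cauchy–Schwarz over `Y`, `P(X_0 Y ∈ T)² ≤ P(X_0 Y ∈ T and X_0' Y ∈ T)`. The event `X_0 = X_0'`
contributes at most `ρ_0 P(X_0 Y ∈ T)`. When `X_0 = x` and `X_0' = x'` differ, the point `x Y` lies
in `T ∩ x x'⁻¹ T`, whose dimension is one less, so induction on the dimension bounds the remaining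
contribution by `K B²`, where `B = max_i ρ_i^{1/2^i}`: dropping `X_0` halves every denominator
`2^i`. The resulting quadratic inequality gives `P(X_0 Y ∈ T) ≤ (K + 1) B`. -/

theorem tsum_mul_rpow_le {ι : Type*} {w : ι → ℝ≥0∞} (hw : ∑' i, w i ≤ 1) (a : ι → ℝ≥0∞)
    {r : ℝ} (hr : 1 ≤ r) : (∑' i, w i * a i) ^ r ≤ ∑' i, w i * a i ^ r := by
  have hr₀ : 0 < r := one_pos.trans_le hr
  rw [← ENNReal.le_rpow_inv_iff hr₀, ENNReal.tsum_eq_iSup_sum]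
  refine iSup_le fun s => ?_
  calc ∑ i ∈ s, w i * a i
      ≤ (∑ i ∈ s, w i) ^ (1 - r⁻¹) * (∑ i ∈ s, w i * a i ^ r) ^ r⁻¹ :=
        ENNReal.inner_le_weight_mul_Lp_of_nonneg s hr w a
    _ ≤ 1 * (∑' i, w i * a i ^ r) ^ r⁻¹ := by
        gcongr
        · exact ENNReal.rpow_le_one ((ENNReal.sum_le_tsum s).trans hw)
            (sub_nonneg.2 (inv_le_one_of_one_le₀ hr))
        · exact ENNReal.sum_le_tsum s
    _ = (∑' i, w i * a i ^ r) ^ r⁻¹ := one_mul _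

theorem le_add_one_mul_of_sq_le {p B K : ℝ≥0∞} (hp : p ≠ ∞) (h : p ^ 2 ≤ B * p + K * B ^ 2) :
    p ≤ (K + 1) * B := by
  rcases le_or_gt p B with hpB | hBp
  · exact hpB.trans (le_mul_of_one_le_left' le_add_self)
  · rw [← ENNReal.mul_le_mul_iff_left hBp.ne_bot hp]
    calc p * p = p ^ 2 := (sq p).symm
      _ ≤ B * p + K * B ^ 2 := h
      _ ≤ B * p + K * (B * p) := by rw [sq]; gcongr
      _ = (K + 1) * B * p := by ring

/-- The quantity `max_i ρ_i^{1/2^i}` in which the hitting probabilities are bounded. -/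
noncomputable def dyadicRootMax {n : ℕ} (ρ : Fin n → ℝ≥0∞) : ℝ≥0∞ :=
  ⨆ i, ρ i ^ ((1 : ℝ) / 2 ^ (i : ℕ))

theorem rpow_le_dyadicRootMax {n : ℕ} (ρ : Fin n → ℝ≥0∞) (i : Fin n) :
    ρ i ^ ((1 : ℝ) / 2 ^ (i : ℕ)) ≤ dyadicRootMax ρ :=
  le_iSup (fun i => ρ i ^ ((1 : ℝ) / 2 ^ (i : ℕ))) i

theorem apply_zero_le_dyadicRootMax {n : ℕ} (ρ : Fin (n + 1) → ℝ≥0∞) : ρ 0 ≤ dyadicRootMax ρ := by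
  simpa using rpow_le_dyadicRootMax ρ 0

theorem dyadicRootMax_tail_le_sq {n : ℕ} (ρ : Fin (n + 1) → ℝ≥0∞) :
    dyadicRootMax (Fin.tail ρ) ≤ dyadicRootMax ρ ^ 2 := by
  refine iSup_le fun i => ?_
  have hexp : (1 : ℝ) / 2 ^ (i : ℕ) = 1 / 2 ^ (i.succ : ℕ) * (2 : ℕ) := by
    rw [Fin.val_succ, pow_succ]
    field_simp
    norm_num
  rw [hexp, ENNReal.rpow_mul_natCast]
  exact pow_le_pow_left' (rpow_le_dyadicRootMax ρ i.succ) 2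

section MaxAtom

variable {α β : Type*}

/-- The largest point mass `sup_a P(X = a)` of a random element `X` with distribution `p`. -/
noncomputable def maxAtom (p : PMF α) : ℝ≥0∞ :=
  ⨆ a, p a

theorem apply_le_maxAtom (p : PMF α) (a : α) : p a ≤ maxAtom p :=
  le_iSup p a

theorem toOuterMeasure_le_encard_mul_maxAtom (p : PMF α) (S : Set α) :
    p.toOuterMeasure S ≤ S.encard * maxAtom p := by
  rw [p.toOuterMeasure_apply, ← tsum_subtype S p, ← ENNReal.tsum_set_const]
  exact ENNReal.tsum_le_tsum fun a => apply_le_maxAtom p a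

theorem toOuterMeasure_ne_top (p : PMF α) (S : Set α) : p.toOuterMeasure S ≠ ∞ := by
  rw [p.toOuterMeasure_apply]
  exact ne_top_of_le_ne_top p.tsum_coe_ne_top
    (ENNReal.tsum_le_tsum fun a => Set.indicator_le_self S p a)

theorem tsum_mul_le_maxAtom_mul_add (p : PMF α) {c : α → ℝ≥0∞} {a : α} {L : ℝ≥0∞}
    (hc : ∀ b, b ≠ a → c b ≤ L) : ∑' b, p b * c b ≤ maxAtom p * c a + L := by
  classical
  rw [ENNReal.tsum_eq_add_tsum_ite a]
  gcongr
  · exact apply_le_maxAtom p a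
  calc ∑' b, (if b = a then 0 else p b * c b) ≤ ∑' b, p b * L := by
        refine ENNReal.tsum_le_tsum fun b => ?_
        split_ifs with hb
        · exact zero_le
        · exact mul_le_mul_right (hc b hb) _
    _ = L := by rw [ENNReal.tsum_mul_right, p.tsum_coe, one_mul]

theorem sq_tsum_mul_toOuterMeasure_le (w : α → ℝ≥0∞) (q : PMF β) (A : α → Set β) :
    (∑' x, w x * q.toOuterMeasure (A x)) ^ 2 ≤
      ∑' x, w x * ∑' x', w x' * q.toOuterMeasure (A x' ∩ A x) := by
  set e : α → β → ℝ≥0∞ := fun x => (A x).indicator 1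
  have hq : ∀ S : Set β, q.toOuterMeasure S = ∑' y, q y * S.indicator 1 y := fun S => by
    classical simp [q.toOuterMeasure_apply, Set.indicator_apply]
  calc (∑' x, w x * q.toOuterMeasure (A x)) ^ 2
      = (∑' y, q y * ∑' x, w x * e x y) ^ 2 := by
        simp only [hq, ← ENNReal.tsum_mul_left]
        rw [ENNReal.tsum_comm]
        simp only [mul_left_comm, e]
    _ ≤ ∑' y, q y * (∑' x, w x * e x y) ^ 2 := by
        simpa only [ENNReal.rpow_two] using
          tsum_mul_rpow_le q.tsum_coe.le (fun y => ∑' x, w x * e x y) one_le_two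
    _ = ∑' y, ∑' x, ∑' x', w x * (w x' * (q y * (e x' y * e x y))) := by
        refine tsum_congr fun y => ?_
        rw [sq, ← ENNReal.tsum_mul_right, ← ENNReal.tsum_mul_left]
        refine tsum_congr fun x => ?_
        rw [← ENNReal.tsum_mul_left, ← ENNReal.tsum_mul_left]
        exact tsum_congr fun x' => by ring
    _ = ∑' x, ∑' x', ∑' y, w x * (w x' * (q y * (e x' y * e x y))) := by
        rw [ENNReal.tsum_comm]
        exact tsum_congr fun x => ENNReal.tsum_comm
    _ = ∑' x, w x * ∑' x', w x' * q.toOuterMeasure (A x' ∩ A x) := by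
        simp only [hq, ENNReal.tsum_mul_left, Set.inter_indicator_one, Pi.mul_apply, e]

theorem sq_tsum_mul_toOuterMeasure_le_maxAtom_mul_add (p : PMF α) (q : PMF β) {A : α → Set β}
    {L : ℝ≥0∞} (hA : Pairwise fun x x' => q.toOuterMeasure (A x ∩ A x') ≤ L) :
    (∑' x, p x * q.toOuterMeasure (A x)) ^ 2 ≤
      maxAtom p * (∑' x, p x * q.toOuterMeasure (A x)) + L :=
  calc (∑' x, p x * q.toOuterMeasure (A x)) ^ 2
      ≤ ∑' x, p x * ∑' x', p x' * q.toOuterMeasure (A x' ∩ A x) :=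
        sq_tsum_mul_toOuterMeasure_le p q A
    _ ≤ ∑' x, p x * (maxAtom p * q.toOuterMeasure (A x) + L) := by
        gcongr with x
        simpa only [Set.inter_self] using
          tsum_mul_le_maxAtom_mul_add p (c := fun x' => q.toOuterMeasure (A x' ∩ A x))
            fun x' hx' => hA hx'
    _ = maxAtom p * (∑' x, p x * q.toOuterMeasure (A x)) + L := by
        simp only [mul_add, mul_left_comm (p _)]
        rw [ENNReal.tsum_add, ENNReal.tsum_mul_left, ENNReal.tsum_mul_right, p.tsum_coe, one_mul]

end MaxAtom

section WalkLaw

variable {G : Type*} [Group G] {n : ℕ}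

/-- The distribution of the ordered product `X_0 X_1 ⋯ X_{n-1}` of independent `X_i ~ ν i`, built up
one left factor at a time. -/
noncomputable def walkLaw : {n : ℕ} → (Fin n → PMF G) → PMF G
  | 0, _ => PMF.pure 1
  | _ + 1, ν => (ν 0).bind fun x => (walkLaw (Fin.tail ν)).map (x * ·)

theorem walkLaw_one (ν : Fin 1 → PMF G) : walkLaw ν = ν 0 := by
  simp only [walkLaw, PMF.pure_map, mul_one, PMF.bind_pure]

theorem walkLaw_succ_apply (ν : Fin (n + 1) → PMF G) (S : Set G) :
    (walkLaw ν).toOuterMeasure S =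
      ∑' x, ν 0 x * (walkLaw (Fin.tail ν)).toOuterMeasure ((x * ·) ⁻¹' S) := by
  simp only [walkLaw, PMF.toOuterMeasure_bind_apply, PMF.toOuterMeasure_map_apply]

theorem walkProb_succ (ν : Fin (n + 1) → PMF G) (S : Set G) :
    walkProb ν S = ∑' x, ν 0 x * walkProb (Fin.tail ν) ((x * ·) ⁻¹' S) := by
  unfold walkProb
  rw [← (Fin.consEquiv fun _ : Fin (n + 1) => G).tsum_eq, ENNReal.tsum_prod']
  refine tsum_congr fun x => ?_
  rw [← ENNReal.tsum_mul_left]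
  refine tsum_congr fun v => ?_
  simp only [Fin.consEquiv_apply, Fin.prod_univ_succ, Fin.cons_zero, Fin.cons_succ,
    List.ofFn_succ, List.prod_cons, mul_assoc]
  rfl

theorem walkProb_eq_walkLaw (ν : Fin n → PMF G) (S : Set G) :
    walkProb ν S = (walkLaw ν).toOuterMeasure S := by
  induction n generalizing S with
  | zero => classical simp [walkProb, walkLaw, Set.indicator_apply]
  | succ n ih => simp only [walkProb_succ, walkLaw_succ_apply, ih]

theorem walkLaw_le_of_pairwise_preimage_inter_le (ν : Fin (n + 1) → PMF G) {T : Set G} {K : ℝ≥0∞}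
    (hT : Pairwise fun x x' : G =>
      (walkLaw (Fin.tail ν)).toOuterMeasure ((x * ·) ⁻¹' T ∩ (x' * ·) ⁻¹' T) ≤
        K * dyadicRootMax fun i => maxAtom (Fin.tail ν i)) :
    (walkLaw ν).toOuterMeasure T ≤ (K + 1) * dyadicRootMax fun i => maxAtom (ν i) := by
  set B := dyadicRootMax fun i => maxAtom (ν i)
  refine le_add_one_mul_of_sq_le (toOuterMeasure_ne_top _ _) ?_
  calc (walkLaw ν).toOuterMeasure T ^ 2
      ≤ maxAtom (ν 0) * (walkLaw ν).toOuterMeasure T +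
          K * dyadicRootMax fun i => maxAtom (Fin.tail ν i) := by
        rw [walkLaw_succ_apply]
        exact sq_tsum_mul_toOuterMeasure_le_maxAtom_mul_add _ _ hT
    _ ≤ B * (walkLaw ν).toOuterMeasure T + K * B ^ 2 := by
        gcongr
        · exact apply_zero_le_dyadicRootMax fun i => maxAtom (ν i)
        · exact dyadicRootMax_tail_le_sq fun i => maxAtom (ν i)

end WalkLaw

section Translates

variable {G : Type*} [Group G]

theorem preimage_mul_inter_image_mul (x g : G) (T : Set G) :
    (x * ·) ⁻¹' (T ∩ (g * ·) '' T) = (x * ·) ⁻¹' T ∩ (g⁻¹ * x * ·) ⁻¹' T := by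
  simp only [Set.image_mul_left, Set.preimage_inter, Set.preimage_preimage, mul_assoc]

theorem SelfTranslateDim.preimage_mul {C k : ℕ} {S : Set G} (hS : SelfTranslateDim C k S) (x : G) :
    SelfTranslateDim C k ((x * ·) ⁻¹' S) := by
  induction hS generalizing x with
  | base S hfin hcard =>
    have hinj : Function.Injective (x * ·) := mul_right_injective x
    refine .base _ (hfin.preimage hinj.injOn) ?_
    rwa [Nat.card_preimage_of_injective hinj (by simp [(mul_left_surjective x).range_eq])]
  | step k S T hS _ ih =>
    refine .step k _ (fun i => (x * ·) ⁻¹' T i) (by rw [hS, Set.preimage_iUnion]) fun i g hg => ?_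
    have hconj : x * g * x⁻¹ ≠ 1 := conj_eq_one_iff.not.2 hg
    convert ih i _ hconj x using 1
    rw [preimage_mul_inter_image_mul]
    simp [Set.image_mul_left, Set.preimage_preimage, mul_assoc]

-- The constant is the solution of `K_0 = C`, `K_{k+1} = C (K_k + 1)`.
theorem SelfTranslateDim.walkLaw_le {C k : ℕ} {S : Set G} (hS : SelfTranslateDim C k S)
    (ν : Fin (k + 1) → PMF G) :
    (walkLaw ν).toOuterMeasure S ≤
      (∑ j ∈ Finset.range (k + 1), (C : ℝ≥0∞) ^ (j + 1)) *
        dyadicRootMax fun i => maxAtom (ν i) := by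
  induction k generalizing S with
  | zero =>
    obtain ⟨_, hfin, hcard⟩ := hS
    calc (walkLaw ν).toOuterMeasure S ≤ S.encard * maxAtom (ν 0) := by
          rw [walkLaw_one]
          exact toOuterMeasure_le_encard_mul_maxAtom (ν 0) S
      _ ≤ C * dyadicRootMax fun i => maxAtom (ν i) := by
          gcongr
          · rw [← hfin.cast_ncard_eq]
            exact_mod_cast hcard
          · exact apply_zero_le_dyadicRootMax fun i => maxAtom (ν i)
      _ = _ := by simp
  | succ k ih =>
    obtain _ | ⟨_, _, T, rfl, hT⟩ := hS
    set K : ℝ≥0∞ := ∑ j ∈ Finset.range (k + 1), (C : ℝ≥0∞) ^ (j + 1)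
    set B := dyadicRootMax fun i => maxAtom (ν i)
    have hcell : ∀ i, (walkLaw ν).toOuterMeasure (T i) ≤ (K + 1) * B := fun i => by
      refine walkLaw_le_of_pairwise_preimage_inter_le ν fun x x' hx => ?_
      have hdim := (hT i (x * x'⁻¹) (mul_inv_eq_one.not.2 hx)).preimage_mul x
      rw [preimage_mul_inter_image_mul] at hdim
      simpa using ih hdim (Fin.tail ν)
    calc (walkLaw ν).toOuterMeasure (⋃ i, T i)
        ≤ ∑ i, (walkLaw ν).toOuterMeasure (T i) := MeasureTheory.measure_iUnion_fintype_le _ T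
      _ ≤ ∑ _i : Fin C, (K + 1) * B := Finset.sum_le_sum fun i _ => hcell i
      _ = C * (K + 1) * B := by simp [mul_assoc]
      _ = _ := by
          rw [Finset.sum_range_succ' _ (k + 1)]
          simp only [K, pow_succ _ (_ + 1), ← Finset.sum_mul]
          ring

end Translates

/-- If `S ⊆ G` has self-translate dimension `≤ k` of complexity `C`, and `X_0, …, X_k` are
independent `G`-valued random elements with `ρ_i = sup_g P(X_i = g)`, then
`P(X_0 X_1 ⋯ X_k ∈ S) ≤ K · max_i ρ_i^{1/2^i}` for a constant `K = K(C, k)`. -/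
theorem selfTranslateDim_prod_mem_le (C k : ℕ) (hC : 1 ≤ C) :
    ∃ K : ℝ≥0, ∀ (G : Type u) [Group G] (ν : Fin (k + 1) → PMF G) (S : Set G),
      SelfTranslateDim C k S →
      walkProb ν S ≤
        (K : ℝ≥0∞) * ⨆ i : Fin (k + 1), (⨆ g : G, ν i g) ^ ((1 : ℝ) / 2 ^ (i : ℕ)) := by
  refine ⟨∑ j ∈ Finset.range (k + 1), (C : ℝ≥0) ^ (j + 1), fun G _ ν S hS => ?_⟩
  rw [walkProb_eq_walkLaw]
  push_cast
  exact hS.walkLaw_le ν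
end

section
/- Let Y and Z be independent random variables with discrete distributions taking values in sets A and B respectively, and let E ⊆ A × B be an event depending on the outcomes of Y and Z. Set μ = sup over y of P(Y = y) and λ = sup over pairs y ≠ y' in A of P((y, Z) ∈ E and (y', Z) ∈ E). Then P((Y, Z) ∈ E) ≤ λ^{1/2} + 2μ. -/
open scoped ENNReal

/-!
Put `X = P(E | Z) = ∑ y, P(Y = y) 1_{(y, Z) ∈ E}`, so that `p = P((Y, Z) ∈ E)` is the mean of `X`.
By Cauchy–Schwarz `p² ≤ 𝔼 X²`, and `𝔼 X²` is the probability that both `(Y, Z)` and `(Y', Z)` lie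
in `E`, for an independent copy `Y'` of `Y`. The pairs `Y ≠ Y'` contribute at most `λ` and the
diagonal `Y = Y'` at most `μ p`. Hence `p² ≤ λ + μ p`, which forces `p ≤ λ^{1/2} + μ`.
-/

open MeasureTheory

namespace Decoupling

theorem le_add_of_sq_le_sq_add_mul {p s m : ℝ≥0∞} (hp : p ≠ ∞) (h : p ^ 2 ≤ s ^ 2 + m * p) :
    p ≤ s + m := by
  rcases le_total p s with hps | hsp
  · exact le_add_right hps
  rcases eq_or_ne p 0 with rfl | hp0
  · exact zero_le
  have hmul : p * p ≤ (s + m) * p := calc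
    p * p = p ^ 2 := (sq p).symm
    _ ≤ s * s + m * p := by rwa [← sq s]
    _ ≤ s * p + m * p := by gcongr
    _ = (s + m) * p := (add_mul s m p).symm
  exact (ENNReal.mul_le_mul_iff_left hp0 hp).1 hmul

theorem tsum_mul_tsum_mul_le {A : Type*} (w : A → ℝ≥0∞) (G : A → A → ℝ≥0∞) :
    ∑' y, w y * ∑' y', w y' * G y y' ≤
      (∑' y, w y) ^ 2 * (⨆ (y : A) (y' : A) (_ : y ≠ y'), G y y') +
        (⨆ y, w y) * ∑' y, w y * G y y := by
  classical
  set l := ⨆ (y : A) (y' : A) (_ : y ≠ y'), G y y'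
  have hpair (y y' : A) :
      w y' * G y y' ≤ w y' * l + if y' = y then (⨆ y, w y) * G y y else 0 := by
    split_ifs with hy
    · subst hy
      exact le_add_left (mul_le_mul_left (le_iSup w y') _)
    · rw [add_zero]
      gcongr
      exact le_iSup₂_of_le y y' (le_iSup_of_le (Ne.symm hy) le_rfl)
  calc ∑' y, w y * ∑' y', w y' * G y y'
      ≤ ∑' y, w y * ∑' y', (w y' * l + if y' = y then (⨆ y, w y) * G y y else 0) := by
        gcongr with y y'
        exact hpair y y'
    _ = ∑' y, (w y * ((∑' y', w y') * l) + (⨆ y, w y) * (w y * G y y)) := by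
        simp only [ENNReal.tsum_add, tsum_ite_eq, ENNReal.tsum_mul_right, mul_add, mul_left_comm]
    _ = (∑' y, w y) ^ 2 * l + (⨆ y, w y) * ∑' y, w y * G y y := by
        rw [ENNReal.tsum_add, ENNReal.tsum_mul_right, ENNReal.tsum_mul_left, ← mul_assoc, ← sq]

section WeightedSums

variable {A B : Type*} [MeasurableSpace B] {ν : Measure B} {w : A → ℝ≥0∞} {f : A → B → ℝ≥0∞}

theorem tsum_mul_eq_tsum_support (w g : A → ℝ≥0∞) :
    ∑' y, w y * g y = ∑' y : w.support, w y * g y :=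
  (tsum_subtype_eq_of_support_subset (Function.support_mul_subset_left w g)).symm

theorem aemeasurable_tsum_mul (hw : w.support.Countable) (hf : ∀ y, AEMeasurable (f y) ν) :
    AEMeasurable (fun z ↦ ∑' y, w y * f y z) ν := by
  have := hw.to_subtype
  simp only [tsum_mul_eq_tsum_support w]
  exact .tsum fun y ↦ (hf y).const_mul (w y)

theorem lintegral_tsum_mul (hw : w.support.Countable) (hf : ∀ y, AEMeasurable (f y) ν) :
    ∫⁻ z, ∑' y, w y * f y z ∂ν = ∑' y, w y * ∫⁻ z, f y z ∂ν := by
  have := hw.to_subtype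
  simp only [tsum_mul_eq_tsum_support w]
  rw [lintegral_tsum fun y : w.support ↦ (hf y).const_mul (w y)]
  exact tsum_congr fun y ↦ lintegral_const_mul'' _ (hf y)

theorem lintegral_sq_tsum_mul (hw : w.support.Countable) (hf : ∀ y, AEMeasurable (f y) ν) :
    ∫⁻ z, (∑' y, w y * f y z) ^ 2 ∂ν =
      ∑' y, w y * ∑' y', w y' * ∫⁻ z, f y z * f y' z ∂ν := by
  have hexpand (z : B) :
      (∑' y, w y * f y z) ^ 2 = ∑' y, w y * ∑' y', w y' * (f y z * f y' z) := by
    simp only [sq, ← ENNReal.tsum_mul_right, ← ENNReal.tsum_mul_left]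
    exact tsum_congr fun y ↦ tsum_congr fun y' ↦ by ring
  have hff (y y' : A) : AEMeasurable (fun z ↦ f y z * f y' z) ν := (hf y).mul (hf y')
  simp only [hexpand]
  rw [lintegral_tsum_mul hw fun y ↦ aemeasurable_tsum_mul hw (hff y)]
  exact tsum_congr fun y ↦ by rw [lintegral_tsum_mul hw (hff y)]

theorem sq_lintegral_le_lintegral_sq [IsProbabilityMeasure ν] {g : B → ℝ≥0∞}
    (hg : AEMeasurable g ν) : (∫⁻ z, g z ∂ν) ^ 2 ≤ ∫⁻ z, g z ^ 2 ∂ν := by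
  have hnorm := eLpNorm'_le_eLpNorm'_of_exponent_le one_pos one_le_two ν hg.aestronglyMeasurable
  simp only [eLpNorm'_eq_lintegral_enorm, enorm_eq_self, ENNReal.rpow_one, ENNReal.rpow_two,
    one_div, inv_one] at hnorm
  rwa [ENNReal.le_rpow_inv_iff two_pos, ENNReal.rpow_two] at hnorm

theorem sq_tsum_mul_lintegral_le [IsProbabilityMeasure ν] (hw : w.support.Countable)
    (hf : ∀ y, AEMeasurable (f y) ν) :
    (∑' y, w y * ∫⁻ z, f y z ∂ν) ^ 2 ≤
      (∑' y, w y) ^ 2 * (⨆ (y : A) (y' : A) (_ : y ≠ y'), ∫⁻ z, f y z * f y' z ∂ν) +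
        (⨆ y, w y) * ∑' y, w y * ∫⁻ z, f y z * f y z ∂ν := calc
  (∑' y, w y * ∫⁻ z, f y z ∂ν) ^ 2 = (∫⁻ z, ∑' y, w y * f y z ∂ν) ^ 2 := by
    rw [lintegral_tsum_mul hw hf]
  _ ≤ ∫⁻ z, (∑' y, w y * f y z) ^ 2 ∂ν :=
    sq_lintegral_le_lintegral_sq (aemeasurable_tsum_mul hw hf)
  _ = ∑' y, w y * ∑' y', w y' * ∫⁻ z, f y z * f y' z ∂ν := lintegral_sq_tsum_mul hw hf
  _ ≤ _ := tsum_mul_tsum_mul_le w _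

end WeightedSums

theorem sq_tsum_mul_measure_le {A B : Type*} [MeasurableSpace B] (μY : PMF A) (ν : Measure B)
    [IsProbabilityMeasure ν] {S : A → Set B} (hS : ∀ y, MeasurableSet (S y)) :
    (∑' y, μY y * ν (S y)) ^ 2 ≤
      (⨆ (y : A) (y' : A) (_ : y ≠ y'), ν (S y ∩ S y')) +
        (⨆ y, μY y) * ∑' y, μY y * ν (S y) := by
  have hinter (y y' : A) :
      ∫⁻ z, (S y).indicator 1 z * (S y').indicator 1 z ∂ν = ν (S y ∩ S y') := by
    rw [← lintegral_indicator_one ((hS y).inter (hS y')), Set.inter_indicator_one]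
    rfl
  have hsq := sq_tsum_mul_lintegral_le (ν := ν) μY.support_countable
    fun y ↦ (measurable_one.indicator (hS y)).aemeasurable
  simpa only [hinter, Set.inter_self, lintegral_indicator_one (hS _), μY.tsum_coe, one_pow,
    one_mul] using hsq

theorem tsum_mul_measure_le_one {A B : Type*} [MeasurableSpace B] (μY : PMF A) (ν : Measure B)
    [IsProbabilityMeasure ν] (S : A → Set B) : ∑' y, μY y * ν (S y) ≤ 1 := calc
  ∑' y, μY y * ν (S y) ≤ ∑' y, μY y :=
    ENNReal.tsum_le_tsum fun _ ↦ mul_le_of_le_one_right' prob_le_one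
  _ = 1 := μY.tsum_coe

theorem tsum_mul_indicator_one {B : Type*} [MeasurableSpace B] [MeasurableSingletonClass B]
    (q : PMF B) (s : Set B) :
    ∑' z, q z * s.indicator (fun _ ↦ (1 : ℝ≥0∞)) z = q.toMeasure s := by
  classical
  simp only [q.toMeasure_apply_eq_tsum, Set.indicator_apply, mul_ite, mul_one, mul_zero]

theorem tsum_prod_mul_indicator_one {A B : Type*} [MeasurableSpace B] [MeasurableSingletonClass B]
    (w : A → ℝ≥0∞) (q : PMF B) (E : Set (A × B)) :
    ∑' p : A × B, w p.1 * q p.2 * E.indicator (fun _ ↦ (1 : ℝ≥0∞)) p =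
      ∑' y, w y * q.toMeasure (Prod.mk y ⁻¹' E) := by
  simp only [ENNReal.tsum_prod', mul_assoc, ENNReal.tsum_mul_left, ← tsum_mul_indicator_one]
  rfl

end Decoupling

open Decoupling

/-- `S y` is the section `{z | (y, z) ∈ E}` of the event, and `ν` the law of `Z`. -/
theorem decoupling_general {A B : Type*} [MeasurableSpace B] (μY : PMF A) (ν : Measure B)
    [IsProbabilityMeasure ν] {S : A → Set B} (hS : ∀ y, MeasurableSet (S y)) :
    ∑' y, μY y * ν (S y) ≤
      (⨆ (y : A) (y' : A) (_ : y ≠ y'), ν (S y ∩ S y')) ^ ((1 : ℝ) / 2) + ⨆ y, μY y := by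
  have hfinite : ∑' y, μY y * ν (S y) ≠ ∞ :=
    ne_top_of_le_ne_top ENNReal.one_ne_top (tsum_mul_measure_le_one μY ν S)
  have hroot (l : ℝ≥0∞) : (l ^ ((1 : ℝ) / 2)) ^ 2 = l := by
    rw [one_div]
    exact ENNReal.rpow_inv_natCast_pow two_ne_zero l
  refine le_add_of_sq_le_sq_add_mul hfinite ?_
  rw [hroot]
  exact sq_tsum_mul_measure_le μY ν hS

/-- Decoupling inequality: for independent discrete random variables `Y ~ μY` on `A` and
`Z ~ μZ` on `B` and an event `E ⊆ A × B`, with `μ = sup_y P(Y = y)` and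
`λ = sup_{y ≠ y'} P((y,Z) ∈ E ∧ (y',Z) ∈ E)`, we have `P((Y,Z) ∈ E) ≤ λ^{1/2} + 2μ`. -/
theorem decoupling {A B : Type*} (μY : PMF A) (μZ : PMF B) (E : Set (A × B)) :
    (∑' p : A × B, μY p.1 * μZ p.2 * E.indicator (fun _ => (1 : ℝ≥0∞)) p) ≤
      (⨆ (y : A) (y' : A) (_ : y ≠ y'),
          ∑' z : B, μZ z *
            ({z : B | (y, z) ∈ E ∧ (y', z) ∈ E}).indicator (fun _ => (1 : ℝ≥0∞)) z)
        ^ ((1 : ℝ) / 2)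
      + 2 * ⨆ y : A, μY y := by
  let : MeasurableSpace B := ⊤
  simp only [tsum_prod_mul_indicator_one, tsum_mul_indicator_one]
  exact (decoupling_general μY μZ.toMeasure fun _ ↦ trivial).trans
    (add_le_add_right (le_mul_of_one_le_left' one_le_two) _)
end

section
/- Let G be a group, let k ≥ 0 and C ≥ 1 be integers, and let S ⊆ G be a subset of self-translate dimension ≤ k of complexity C. Then there exists a positive integer N depending only on C and k such that for every m ≥ N there do NOT exist subsets A_1, …, A_{k+1} ⊆ G with |A_i| = m for all i and with a_1 a_2 ⋯ a_{k+1} ∈ S for every choice of a_i ∈ A_i. In particular, the robust multiplicative dimension of S is at most its self-translate dimension. -/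
universe u

/-- `S` robustly contains `r`-dimensional multiplicative structure: for every `C` there are
finite sets `A_1, …, A_r ⊆ G` of size `C` with every ordered product `a_1 ⋯ a_r ∈ S`. -/
def RobustlyContains {G : Type u} [Group G] (S : Set G) (r : ℕ) : Prop :=
  ∀ C : ℕ, ∃ A : Fin r → Finset G, (∀ i, (A i).card = C) ∧
    ∀ a : Fin r → G, (∀ i, a i ∈ A i) → (List.ofFn a).prod ∈ S

/-- The robust multiplicative dimension of `S`. -/
noncomputable def dimRob {G : Type u} [Group G] (S : Set G) : ℕ∞ :=
  ⨆ r ∈ {r : ℕ | RobustlyContains S r}, (r : ℕ∞)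

/-- The self-translate dimension of `S`. -/
noncomputable def dimSelf {G : Type u} [Group G] (S : Set G) : ℕ∞ :=
  ⨅ k ∈ {k : ℕ | ∃ C : ℕ, SelfTranslateDim C k S}, (k : ℕ∞)

/-!
If `S = T₁ ∪ ⋯ ∪ T_C` contains a large `(k + 2)`-dimensional grid, fix `C + 1` elements of its first
side. For every product `x` of elements of the other sides, two of these elements, `a ≠ b`, put
`a * x` and `b * x` in the same `Tᵢ`. Colour `x` by `(a, b, i)`: since grids are partition regular,
one colour contains a large `(k + 1)`-dimensional grid, and multiplying that grid on the left by `a`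
places it in `Tᵢ ∩ (a * b⁻¹) Tᵢ`, a set of self-translate dimension `≤ k`.
-/

/-- `S` contains an `r`-dimensional multiplication grid with sides of size `m`, that is, the
`r`-uniform multiplication hypergraph of `S` contains a product `A_1 × ⋯ × A_r` with `|A_i| = m`.
`RobustlyContains S r` asks for this at every `m`. -/
def HasProductGrid {G : Type*} [Monoid G] (S : Set G) (r m : ℕ) : Prop :=
  ∃ A : Fin r → Finset G, (∀ i, (A i).card = m) ∧
    ∀ a : Fin r → G, (∀ i, a i ∈ A i) → (List.ofFn a).prod ∈ S

namespace HasProductGrid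

section Monoid

variable {G : Type*} [Monoid G] {S S' : Set G} {r m m' : ℕ}

theorem mono (h : HasProductGrid S r m) (hS : S ⊆ S') : HasProductGrid S' r m := by
  obtain ⟨A, hA, hAS⟩ := h
  exact ⟨A, hA, fun a ha => hS (hAS a ha)⟩

theorem anti_card (h : HasProductGrid S r m) (hm : m' ≤ m) : HasProductGrid S r m' := by
  obtain ⟨A, hA, hAS⟩ := h
  choose B hBA hB using fun i => Finset.exists_subset_card_eq (hm.trans_eq (hA i).symm)
  exact ⟨B, hB, fun a ha => hAS a fun i => hBA i (ha i)⟩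

theorem zero_iff : HasProductGrid S 0 m ↔ 1 ∈ S := by
  simp [HasProductGrid]

theorem succ_iff :
    HasProductGrid S (r + 1) m ↔
      ∃ A : Finset G, A.card = m ∧ HasProductGrid {x | ∀ a ∈ A, a * x ∈ S} r m := by
  constructor
  · rintro ⟨A, hA, hAS⟩
    refine ⟨A 0, hA 0, Fin.tail A, fun i => hA i.succ, fun t ht a ha => ?_⟩
    simpa using hAS (Fin.cons a t) (Fin.cases ha ht)
  · rintro ⟨A, hA, B, hB, hBS⟩
    refine ⟨Fin.cons A B, Fin.cases hA hB, fun a ha => ?_⟩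
    rw [List.ofFn_succ, List.prod_cons]
    exact hBS _ (fun i => ha i.succ) _ (ha 0)

theorem one_iff : HasProductGrid S 1 m ↔ ∃ A : Finset G, A.card = m ∧ (A : Set G) ⊆ S := by
  simp [succ_iff, zero_iff, Set.subset_def]

theorem exists_embedding {ι : Type*} [Fintype ι] (h : HasProductGrid S (r + 1) m)
    (hι : Fintype.card ι ≤ m) :
    ∃ f : ι ↪ G, HasProductGrid {x | ∀ j, f j * x ∈ S} r m := by
  obtain ⟨A, hA, hAS⟩ := succ_iff.1 h
  obtain ⟨f⟩ : Nonempty (ι ↪ A) := Function.Embedding.nonempty_of_card_le (by simpa [hA] using hι)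
  exact ⟨f.trans (Function.Embedding.subtype _), hAS.mono fun x hx j => hx _ (f j).2⟩

theorem succ_of_embedding {ι : Type*} (f : ι ↪ G) {J : Finset ι} (hJ : m ≤ J.card)
    (h : HasProductGrid {x | ∀ j ∈ J, f j * x ∈ S} r m) : HasProductGrid S (r + 1) m := by
  obtain ⟨I, hIJ, hI⟩ := Finset.exists_subset_card_eq hJ
  refine succ_iff.2 ⟨I.map f, by rw [Finset.card_map, hI], h.mono fun x hx => ?_⟩
  simpa using fun j hj => hx j (hIJ hj)

end Monoid

theorem of_preimage_mul_left {G : Type*} [LeftCancelMonoid G] {S : Set G} {r m : ℕ} (g : G)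
    (h : HasProductGrid ((g * ·) ⁻¹' S) (r + 1) m) : HasProductGrid S (r + 1) m := by
  obtain ⟨A, hA, hAS⟩ := succ_iff.1 h
  refine succ_iff.2 ⟨A.map (mulLeftEmbedding g), by rw [Finset.card_map, hA], ?_⟩
  simpa [mul_assoc] using hAS

theorem exists_of_iUnion (r : ℕ) (K : Type*) [Finite K] (M : ℕ) :
    ∃ N : ℕ, ∀ (G : Type u) [Monoid G] (S : K → Set G),
      HasProductGrid (⋃ κ, S κ) r N → ∃ κ, HasProductGrid (S κ) r M := by
  induction r generalizing K with
  | zero => exact ⟨0, fun G _ S h => by simpa [zero_iff] using h⟩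
  | succ r ih =>
    classical
    have := Fintype.ofFinite K
    -- The `+ 1` makes the pigeonhole step apply to empty `K` as well.
    let L := Fintype.card K * M + 1
    obtain ⟨N, hN⟩ := ih (Fin L → K)
    refine ⟨max L N, fun G _ S h => ?_⟩
    obtain ⟨f, hf⟩ := h.exists_embedding (ι := Fin L) (by simp)
    have hcover : {x | ∀ j, f j * x ∈ ⋃ κ, S κ} ⊆
        ⋃ φ : Fin L → K, {x | ∀ j, f j * x ∈ S (φ j)} := by
      intro x hx
      choose φ hφ using fun j => Set.mem_iUnion.1 (hx j)
      exact Set.mem_iUnion.2 ⟨φ, hφ⟩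
    obtain ⟨φ, hφ⟩ := hN G _ ((hf.mono hcover).anti_card (le_max_right L N))
    obtain ⟨κ, hκ⟩ := Fintype.exists_lt_card_fiber_of_mul_lt_card (n := M) φ (by simp [L])
    refine ⟨κ, succ_of_embedding f hκ.le (hφ.mono fun x hx j hj => ?_)⟩
    rw [← (Finset.mem_filter.1 hj).2]
    exact hx j

theorem exists_inter_translate_of_iUnion (r : ℕ) (ι : Type*) [Finite ι] (M : ℕ) :
    ∃ N : ℕ, ∀ (G : Type u) [Group G] (T : ι → Set G), HasProductGrid (⋃ i, T i) (r + 2) N →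
      ∃ (i : ι) (g : G), g ≠ 1 ∧ HasProductGrid (T i ∩ ((fun x => g * x) '' T i)) (r + 1) M := by
  have := Fintype.ofFinite ι
  let L := Fintype.card ι + 1
  obtain ⟨N, hN⟩ := exists_of_iUnion.{u} (r + 1) ({p : Fin L × Fin L // p.1 ≠ p.2} × ι) M
  refine ⟨max L N, fun G _ T h => ?_⟩
  obtain ⟨f, hf⟩ := h.exists_embedding (ι := Fin L) (by simp)
  have hcover : {x | ∀ j, f j * x ∈ ⋃ i, T i} ⊆
      ⋃ κ : {p : Fin L × Fin L // p.1 ≠ p.2} × ι,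
        {x | f κ.1.1.1 * x ∈ T κ.2 ∧ f κ.1.1.2 * x ∈ T κ.2} := by
    intro x hx
    choose φ hφ using fun j => Set.mem_iUnion.1 (hx j)
    obtain ⟨p, q, hpq, hφpq⟩ := Fintype.exists_ne_map_eq_of_card_lt φ (by simp [L])
    exact Set.mem_iUnion.2 ⟨(⟨(p, q), hpq⟩, φ p), hφ p, hφpq ▸ hφ q⟩
  obtain ⟨⟨⟨⟨p, q⟩, hpq⟩, i⟩, hgrid⟩ := hN G _ ((hf.mono hcover).anti_card (le_max_right L N))
  refine ⟨i, f p * (f q)⁻¹, fun h1 => hpq (f.injective (mul_inv_eq_one.1 h1)), ?_⟩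
  refine of_preimage_mul_left (f p) (hgrid.mono ?_)
  rintro x ⟨hp, hq⟩
  exact ⟨hp, f q * x, hq, by group⟩

end HasProductGrid

theorem SelfTranslateDim.exists_not_hasProductGrid (C k : ℕ) :
    ∃ N : ℕ, ∀ (G : Type u) [Group G] (S : Set G), SelfTranslateDim C k S →
      ¬ HasProductGrid S (k + 1) N := by
  induction k with
  | zero =>
    refine ⟨C + 1, fun G _ S hS hgrid => ?_⟩
    obtain ⟨A, hA, hAS⟩ := HasProductGrid.one_iff.1 hgrid
    cases hS with
    | base _ hfin hcard =>
      have hle : A.card ≤ Nat.card S := by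
        simpa [Nat.card_coe_set_eq] using Set.ncard_le_ncard hAS hfin
      omega
  | succ k ih =>
    obtain ⟨M, hM⟩ := ih
    obtain ⟨N, hN⟩ := HasProductGrid.exists_inter_translate_of_iUnion.{u} k (Fin C) M
    refine ⟨N, fun G _ S hS hgrid => ?_⟩
    cases hS with
    | step _ _ T hT hdim =>
      obtain ⟨i, g, hg, hgrid'⟩ := hN G T (hT ▸ hgrid)
      exact hM G _ (hdim i g hg) hgrid'

section Dimension

variable {G : Type u} [Group G] {S : Set G}

theorem RobustlyContains.anti {r s : ℕ} (h : RobustlyContains S s) (hrs : r + 1 ≤ s) :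
    RobustlyContains S (r + 1) := by
  induction s, hrs using Nat.le_induction with
  | base => exact h
  | succ s hrs ih =>
    refine ih fun m => ?_
    obtain ⟨s, rfl⟩ := Nat.exists_eq_add_of_le' (Nat.one_le_of_lt hrs)
    have hgrid : HasProductGrid S (s + 2) (m + 1) := h (m + 1)
    obtain ⟨f, hf⟩ := hgrid.exists_embedding (ι := Unit) (by simp)
    exact (HasProductGrid.of_preimage_mul_left (f ()) (hf.mono fun x hx => hx ())).anti_card
      m.le_succ

theorem RobustlyContains.le_of_selfTranslateDim {C k r : ℕ} (hr : RobustlyContains S r)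
    (hk : SelfTranslateDim C k S) : r ≤ k := by
  by_contra! hlt
  obtain ⟨N, hN⟩ := SelfTranslateDim.exists_not_hasProductGrid.{u} C k
  exact hN G S hk (hr.anti hlt N)

theorem dimRob_le_dimSelf (S : Set G) : dimRob S ≤ dimSelf S :=
  iSup₂_le fun _ hr => le_iInf₂ fun _ ⟨_, hk⟩ => Nat.cast_le.2 (hr.le_of_selfTranslateDim hk)

end Dimension

/-- If `S ⊆ G` has self-translate dimension `≤ k` of complexity `C`, then there is
`N = N(C, k)` such that for all `m ≥ N` there are no sets `A_1, …, A_{k+1} ⊆ G` of size `m`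
all of whose ordered products `a_1 ⋯ a_{k+1}` lie in `S`; in particular
`dimRob S ≤ dimSelf S`. -/
theorem selfTranslateDim_no_large_grids (C k : ℕ) (hC : 1 ≤ C) :
    ∃ N : ℕ, 0 < N ∧ ∀ (G : Type u) [Group G] (S : Set G), SelfTranslateDim C k S →
      (∀ m : ℕ, N ≤ m →
        ¬ ∃ A : Fin (k + 1) → Finset G, (∀ i, (A i).card = m) ∧
          ∀ a : Fin (k + 1) → G, (∀ i, a i ∈ A i) → (List.ofFn a).prod ∈ S) ∧
      dimRob S ≤ dimSelf S := by
  obtain ⟨N, hN⟩ := SelfTranslateDim.exists_not_hasProductGrid.{u} C k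
  refine ⟨N + 1, N.succ_pos, fun G _ S hS => ⟨fun m hm hgrid => ?_, dimRob_le_dimSelf S⟩⟩
  exact hN G S hS (HasProductGrid.anti_card hgrid (N.le_succ.trans hm))
end

section
/- Let G be a group and S ⊆ G. Then S has self-translate dimension ≤ k of complexity 1 if and only if S contains no product set of the form {a_1, b_1} · {a_2, b_2} · ⋯ · {a_{k+1}, b_{k+1}} with a_i ≠ b_i for all i (where the product set consists of all products c_1 c_2 ⋯ c_{k+1} with c_i ∈ {a_i, b_i}); equivalently, S contains no product set of the form a · {id_G, x_1} · {id_G, x_2} · ⋯ · {id_G, x_{k+1}} with a ∈ G and x_i ≠ id_G for all i. -/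
/-!
Complexity `1` dimension is governed by the recursion "`S` has dimension `≤ k + 1` iff every
`S ∩ gS` with `g ≠ 1` has dimension `≤ k`", starting from sets with at most one element. Containing
a translated cube `a · {1, x₁} ⋯ {1, xₙ}` with all `xᵢ ≠ 1` obeys the complementary recursion:
for a cube `Q`, the set `a · {1, y} · Q` lies in `S` iff both `a · Q` and `a · y · Q` do, which says
that `a · Q` lies in `S ∩ gS` for `g = a y⁻¹ a⁻¹`. Every product `{a₁, b₁} ⋯ {aₙ, bₙ}` is itself a
translated cube, because the `aᵢ` can be moved to the far left by conjugation.
-/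

universe u

section Pointwise

open scoped Pointwise

section PairProd

variable {M : Type u} [Monoid M] {n : ℕ}

/-- The product set `{a₁, b₁} ⋯ {aₙ, bₙ}`. The cube `{1, x₁} ⋯ {1, xₙ}` is encoded as
`pairProd 1 x`. -/
def pairProd (a b : Fin n → M) : Set M :=
  (List.ofFn fun i => ({a i, b i} : Set M)).prod

theorem pairProd_subset_iff {a b : Fin n → M} {S : Set M} :
    pairProd a b ⊆ S ↔
      ∀ c : Fin n → M, (∀ i, c i = a i ∨ c i = b i) → (List.ofFn c).prod ∈ S := by
  simp only [Set.subset_def, pairProd, Set.mem_prod_list_ofFn]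
  constructor
  · intro h c hc
    exact h _ ⟨fun i => ⟨c i, hc i⟩, rfl⟩
  · rintro h _ ⟨c, rfl⟩
    exact h _ fun i => (c i).2

theorem smul_pairProd_subset_iff {u : M} {a b : Fin n → M} {S : Set M} :
    u • pairProd a b ⊆ S ↔
      ∀ c : Fin n → M, (∀ i, c i = a i ∨ c i = b i) → u * (List.ofFn c).prod ∈ S := by
  rw [← Set.image_smul, Set.image_subset_iff, pairProd_subset_iff]
  rfl

@[simp]
theorem pairProd_zero (a b : Fin 0 → M) : pairProd a b = 1 := by
  simp [pairProd]

theorem pairProd_cons (p q : M) (a b : Fin n → M) :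
    pairProd (Fin.cons p a : Fin (n + 1) → M) (Fin.cons q b) =
      p • pairProd a b ∪ q • pairProd a b := by
  rw [pairProd, List.ofFn_succ, List.prod_cons, Fin.cons_zero, Fin.cons_zero, Set.insert_eq,
    Set.union_mul, Set.singleton_mul, Set.singleton_mul]
  simp only [Fin.cons_succ]
  rfl

theorem pairProd_one_cons (y : M) (x : Fin n → M) :
    pairProd 1 (Fin.cons y x : Fin (n + 1) → M) = pairProd 1 x ∪ y • pairProd 1 x := by
  have one_eq_cons : (1 : Fin (n + 1) → M) = Fin.cons 1 1 := by
    ext i; cases i using Fin.cases <;> rfl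
  rw [one_eq_cons, pairProd_cons, one_smul]

theorem smul_pairProd_one_cons_eq_pairProd (a y : M) (x : Fin n → M) :
    a • pairProd 1 (Fin.cons y x : Fin (n + 1) → M) =
      pairProd (Fin.cons a 1 : Fin (n + 1) → M) (Fin.cons (a * y) x) := by
  rw [pairProd_one_cons, pairProd_cons, Set.smul_set_union, smul_smul]

/-- `ContainsCube n S` says that `S` contains a translated cube `a · {1, x₁} ⋯ {1, xₙ}` that is
nondegenerate, in the sense that every `xᵢ ≠ 1`. -/
def ContainsCube (n : ℕ) (S : Set M) : Prop :=
  ∃ (a : M) (x : Fin n → M), (∀ i, x i ≠ 1) ∧ a • pairProd 1 x ⊆ S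

@[simp]
theorem containsCube_zero {S : Set M} : ContainsCube 0 S ↔ S.Nonempty := by
  simp [ContainsCube, Set.Nonempty, ← Set.singleton_one]

end PairProd

variable {G : Type u} [Group G] {n : ℕ} {S : Set G}

theorem smul_pairProd_one_cons_subset_iff {a y : G} {x : Fin n → G} :
    a • pairProd 1 (Fin.cons y x : Fin (n + 1) → G) ⊆ S ↔
      a • pairProd 1 x ⊆ S ∩ (a * y⁻¹ * a⁻¹) • S := by
  rw [pairProd_one_cons, Set.smul_set_union, Set.union_subset_iff, Set.subset_inter_iff,
    Set.subset_smul_set_iff, smul_smul, smul_smul]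
  simp only [mul_inv_rev, inv_inv, mul_assoc, inv_mul_cancel, mul_one]

theorem containsCube_succ :
    ContainsCube (n + 1) S ↔ ∃ g : G, g ≠ 1 ∧ ContainsCube n (S ∩ g • S) := by
  simp only [ContainsCube, Fin.exists_fin_succ_pi, Fin.forall_fin_succ, Fin.cons_zero,
    Fin.cons_succ, smul_pairProd_one_cons_subset_iff]
  constructor
  · rintro ⟨a, y, x, ⟨hy, hx⟩, hS⟩
    exact ⟨a * y⁻¹ * a⁻¹, by simpa using hy, a, x, hx, hS⟩
  · rintro ⟨g, hg, a, x, hx, hS⟩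
    refine ⟨a, a⁻¹ * g⁻¹ * a, x, ⟨?_, hx⟩, by simpa [mul_assoc] using hS⟩
    simpa only [inv_inv] using (conj_eq_one_iff (a := a⁻¹)).not.2 (inv_ne_one.2 hg)

theorem containsCube_one : ContainsCube 1 S ↔ S.Nontrivial := by
  simp only [containsCube_succ, containsCube_zero]
  constructor
  · rintro ⟨g, hg, x, hxS, hx⟩
    exact ⟨x, hxS, g⁻¹ * x, Set.mem_smul_set_iff_inv_smul_mem.1 hx, by simpa using hg⟩
  · rintro ⟨x, hx, y, hy, hxy⟩
    exact ⟨x * y⁻¹, mul_inv_eq_one.not.2 hxy, x, hx, y, hy, by simp⟩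

theorem exists_smul_pairProd_one_eq_pairProd {a b : Fin n → G} (hab : ∀ i, a i ≠ b i) :
    ∃ (u : G) (x : Fin n → G), (∀ i, x i ≠ 1) ∧ u • pairProd 1 x = pairProd a b := by
  induction n with
  | zero => exact ⟨1, 1, fun i => i.elim0, by simp⟩
  | succ n ih =>
    cases a using Fin.consCases with | _ p a
    cases b using Fin.consCases with | _ q b
    simp only [Fin.forall_fin_succ, Fin.cons_zero, Fin.cons_succ] at hab
    obtain ⟨hpq, hab⟩ := hab
    obtain ⟨u, x, hx, hux⟩ := ih hab
    refine ⟨p * u, Fin.cons (u⁻¹ * (p⁻¹ * q) * u) x, ?_, ?_⟩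
    · have conj_ne_one : u⁻¹ * (p⁻¹ * q) * u ≠ 1 := by
        simpa only [inv_inv] using (conj_eq_one_iff (a := u⁻¹)).not.2 (inv_mul_eq_one.not.2 hpq)
      exact Fin.cases conj_ne_one hx
    · have mul_conj : p * u * (u⁻¹ * (p⁻¹ * q) * u) = q * u := by group
      rw [pairProd_one_cons, pairProd_cons, ← hux, Set.smul_set_union, smul_smul, smul_smul,
        smul_smul, mul_conj]

theorem containsCube_succ_iff_exists_pairProd_subset :
    ContainsCube (n + 1) S ↔
      ∃ a b : Fin (n + 1) → G, (∀ i, a i ≠ b i) ∧ pairProd a b ⊆ S := by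
  constructor
  · rintro ⟨a, x, hx, hS⟩
    cases x using Fin.consCases with | _ y x
    rw [smul_pairProd_one_cons_eq_pairProd] at hS
    refine ⟨_, _, ?_, hS⟩
    simpa [Fin.forall_fin_succ, eq_comm] using hx
  · rintro ⟨a, b, hab, hS⟩
    obtain ⟨u, x, hx, hux⟩ := exists_smul_pairProd_one_eq_pairProd hab
    exact ⟨u, x, hx, hux.trans_subset hS⟩

section SelfTranslateDim

variable {C k : ℕ}

theorem selfTranslateDim_zero_iff : SelfTranslateDim C 0 S ↔ S.encard ≤ C := by
  constructor
  · rintro ⟨_, hfin, hcard⟩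
    rw [← hfin.cast_ncard_eq]
    exact_mod_cast hcard
  · intro h
    have hfin : S.Finite := Set.finite_of_encard_le_coe h
    rw [← hfin.cast_ncard_eq] at h
    exact .base S hfin (by exact_mod_cast h)

theorem selfTranslateDim_succ_iff :
    SelfTranslateDim C (k + 1) S ↔
      ∃ T : Fin C → Set G, S = ⋃ i, T i ∧
        ∀ i (g : G), g ≠ 1 → SelfTranslateDim C k (T i ∩ g • T i) :=
  ⟨fun | .step _ _ T hS h => ⟨T, hS, h⟩, fun ⟨T, hS, h⟩ => .step k S T hS h⟩

theorem selfTranslateDim_one_zero_iff : SelfTranslateDim 1 0 S ↔ S.Subsingleton := by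
  rw [selfTranslateDim_zero_iff, Nat.cast_one, Set.encard_le_one_iff_subsingleton]

theorem selfTranslateDim_one_succ_iff :
    SelfTranslateDim 1 (k + 1) S ↔
      ∀ g : G, g ≠ 1 → SelfTranslateDim 1 k (S ∩ g • S) := by
  have iUnion_eq (T : Fin 1 → Set G) : ⋃ i, T i = T 0 := ciSup_unique
  simp only [selfTranslateDim_succ_iff, Fin.forall_fin_one, iUnion_eq]
  constructor
  · rintro ⟨T, rfl, h⟩
    exact h
  · exact fun h => ⟨fun _ => S, rfl, h⟩

theorem selfTranslateDim_one_iff_not_containsCube :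
    SelfTranslateDim 1 k S ↔ ¬ ContainsCube (k + 1) S := by
  induction k generalizing S with
  | zero => rw [selfTranslateDim_one_zero_iff, containsCube_one, Set.not_nontrivial_iff]
  | succ k ih =>
    rw [selfTranslateDim_one_succ_iff, containsCube_succ]
    simp only [ih, not_exists, not_and]

end SelfTranslateDim

end Pointwise

/-- `S` has self-translate dimension `≤ k` of complexity `1` if and only if `S` contains no
product set `{a_1, b_1} ⋯ {a_{k+1}, b_{k+1}}` with `a_i ≠ b_i` for all `i`; equivalently,
`S` contains no product set `a · {1, x_1} ⋯ {1, x_{k+1}}` with `x_i ≠ 1` for all `i`. -/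
theorem selfTranslateDim_one_iff {G : Type u} [Group G] (k : ℕ) (S : Set G) :
    (SelfTranslateDim 1 k S ↔
      ¬ ∃ a b : Fin (k + 1) → G, (∀ i, a i ≠ b i) ∧
        ∀ c : Fin (k + 1) → G, (∀ i, c i = a i ∨ c i = b i) → (List.ofFn c).prod ∈ S) ∧
    (SelfTranslateDim 1 k S ↔
      ¬ ∃ (a : G) (x : Fin (k + 1) → G), (∀ i, x i ≠ 1) ∧
        ∀ e : Fin (k + 1) → G, (∀ i, e i = 1 ∨ e i = x i) →
          a * (List.ofFn e).prod ∈ S) := by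
  simp only [← smul_pairProd_subset_iff, ← pairProd_subset_iff]
  refine ⟨?_, selfTranslateDim_one_iff_not_containsCube⟩
  rw [selfTranslateDim_one_iff_not_containsCube, containsCube_succ_iff_exists_pairProd_subset]
end
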